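/- The equation ψ(1) − L(0,a) = 0, i.e. −γ = L(0,a), has a unique root a₀ in the interval (1/15, ∞) (numerically a₀ ≈ 0.512967071402, and a₀ ∈ (1/2, 3/5)); moreover, for a > 1/15, the inequality ψ(x+1) > L(x,a) holds for all x > 0 if and only if a ∈ (1/15, a₀]. -/

import Mathlib

open Real Filter Set

/-- The digamma function ψ(x) = Γ'(x)/Γ(x), as the derivative of log ∘ Γ. -/
noncomputable def digamma (x : ℝ) : ℝ := deriv (fun y : ℝ => Real.log (Real.Gamma y)) x

/-- L(x,a) = (1/(90a²+2))·ln(x²+x+(3a+1)/3) + (45a²/(90a²+2))·ln(x²+x+(15a−1)/(45a)). -/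
noncomputable def L (x a : ℝ) : ℝ :=
  (1 / (90 * a ^ 2 + 2)) * Real.log (x ^ 2 + x + (3 * a + 1) / 3) +
    (45 * a ^ 2 / (90 * a ^ 2 + 2)) * Real.log (x ^ 2 + x + (15 * a - 1) / (45 * a))

lemma lg_convex : ConvexOn ℝ (Ioi 0) (fun y : ℝ => Real.log (Real.Gamma y)) := convexOn_log_Gamma

lemma lg_rec {x : ℝ} (hx : 0 < x) :
    Real.log (Real.Gamma (x + 1)) = Real.log (Real.Gamma x) + log x := by
  rw [Gamma_add_one hx.ne', log_mul hx.ne' (Gamma_pos_of_pos hx).ne', add_comm]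

lemma lg_diff {x : ℝ} (hx : 0 < x) :
    DifferentiableAt ℝ (fun y : ℝ => Real.log (Real.Gamma y)) x := by
  refine ((differentiableAt_Gamma ?_).log (Gamma_ne_zero ?_)) <;>
    exact fun m ↦ ne_of_gt (by have : (0:ℝ) ≤ m := m.cast_nonneg
                               linarith)

lemma dg_add {x : ℝ} (hx : 0 < x) : digamma (x + 1) = digamma x + 1 / x := by
  unfold digamma
  rw [← deriv_comp_add_const, one_div, ← deriv_log,
      ← deriv_add (lg_diff hx) (differentiableAt_log hx.ne')]
  apply EventuallyEq.deriv_eq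
  filter_upwards [eventually_gt_nhds hx] with y hy using lg_rec hy

lemma dg_lb {x : ℝ} (hx : 0 < x) : log x ≤ digamma (x + 1) := by
  refine (le_of_eq ?_).trans <| lg_convex.slope_le_deriv (mem_Ioi.mpr hx)
      (show (x + 1) ∈ Ioi (0:ℝ) by simp; positivity) (by linarith) (lg_diff <| by positivity)
  rw [slope_def_field, show x + 1 - x = (1 : ℝ) by ring, div_one, lg_rec hx, add_sub_cancel_left]

lemma dg_ub {x : ℝ} (hx : 0 < x) : digamma (x + 1) ≤ log (x + 1) := by
  refine (lg_convex.deriv_le_slope (show (x + 1) ∈ Ioi (0:ℝ) by simp; positivity)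
      (show (x + 1 + 1) ∈ Ioi (0:ℝ) by simp; positivity)
        (by linarith) (lg_diff <| by positivity)).trans (le_of_eq ?_)
  rw [slope_def_field, show x + 1 + 1 - (x + 1) = (1 : ℝ) by ring, div_one,
    lg_rec (by positivity), add_sub_cancel_left]

lemma dg_one : digamma 1 = -Real.eulerMascheroniConstant := by
  unfold digamma
  have := (hasDerivAt_Gamma_one.log (by simp)).deriv
  rw [this]; simp

lemma lim_q (c : ℝ) :
    Tendsto (fun x : ℝ => log (x ^ 2 + x + c) - 2 * log x) atTop (nhds 0) := by
  have h1 : Tendsto (fun x : ℝ => 1 + x⁻¹ + c * (x⁻¹ * x⁻¹)) atTop (nhds (1 + 0 + c * (0 * 0))) :=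
    (tendsto_const_nhds.add tendsto_inv_atTop_zero).add
      (tendsto_const_nhds.mul (tendsto_inv_atTop_zero.mul tendsto_inv_atTop_zero))
  have h2 := h1.log (by norm_num)
  have e : log (1 + 0 + c * (0 * 0)) = 0 := by simp
  rw [e] at h2
  have h3 : ∀ᶠ x : ℝ in atTop, 0 < 1 + x⁻¹ + c * (x⁻¹ * x⁻¹) :=
    h1.eventually (lt_mem_nhds (by norm_num))
  refine h2.congr' ?_
  filter_upwards [h3, eventually_gt_atTop 0] with x hx hx0
  have : x ^ 2 + x + c = (1 + x⁻¹ + c * (x⁻¹ * x⁻¹)) * x ^ 2 := by field_simp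
  rw [this, log_mul hx.ne' (by positivity), log_pow]; push_cast; ring

lemma lim_l (c : ℝ) :
    Tendsto (fun x : ℝ => log (x + c) - log x) atTop (nhds 0) := by
  have h1 : Tendsto (fun x : ℝ => 1 + c * x⁻¹) atTop (nhds (1 + c * 0)) :=
    tendsto_const_nhds.add (tendsto_const_nhds.mul tendsto_inv_atTop_zero)
  have h2 := h1.log (by norm_num)
  have e : log (1 + c * 0) = 0 := by simp
  rw [e] at h2
  have h3 : ∀ᶠ x : ℝ in atTop, 0 < 1 + c * x⁻¹ :=
    h1.eventually (lt_mem_nhds (by norm_num))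
  refine h2.congr' ?_
  filter_upwards [h3, eventually_gt_atTop 0] with x hx hx0
  have : x + c = (1 + c * x⁻¹) * x := by field_simp
  rw [this, log_mul hx.ne' (by positivity)]; ring

lemma lim_dg : Tendsto (fun x : ℝ => digamma (x + 1) - log x) atTop (nhds 0) := by
  refine tendsto_of_tendsto_of_tendsto_of_le_of_le' tendsto_const_nhds (lim_l 1) ?_ ?_
  · filter_upwards [eventually_gt_atTop 0] with x hx
    linarith [dg_lb hx]
  · filter_upwards [eventually_gt_atTop 0] with x hx
    linarith [dg_ub hx]

lemma gen (f : ℝ → ℝ) (lim : Tendsto f atTop (nhds 0))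
    (h : ∀ x y, 0 ≤ x → x ≤ y → f (y + 1) - f y ≤ f (x + 1) - f x) :
    ∀ x y, 0 ≤ x → x ≤ y → f x ≤ f y := by
  intro x y hx hxy
  have t : ∀ z : ℝ, Tendsto (fun n : ℕ => f (z + n)) atTop (nhds 0) := fun z =>
    lim.comp (tendsto_atTop_add_const_left _ _ tendsto_natCast_atTop_atTop)
  have ha : Antitone (fun n : ℕ => f (y + n) - f (x + n)) := by
    apply antitone_nat_of_succ_le
    intro n
    have := h (x + n) (y + n) (by positivity) (by linarith)
    push_cast
    rw [← add_assoc, ← add_assoc]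
    linarith
  have := ha.le_of_tendsto (by simpa using (t y).sub (t x)) 0
  simp at this
  exact this

/-- Difference of digamma and half log is monotone. -/
noncomputable def KK (x : ℝ) : ℝ := digamma (x + 1) - 1 / 2 * log (x ^ 2 + x + 1 / 3)

lemma lim_KK : Tendsto KK atTop (nhds 0) := by
  have := lim_dg.sub ((lim_q (1/3)).const_mul (1/2))
  simp only [mul_zero, sub_zero] at this
  refine this.congr fun x => ?_
  unfold KK; ring

lemma hasDeriv_q (c : ℝ) {x : ℝ} (h : 0 < x ^ 2 + x + c) :
    HasDerivAt (fun x : ℝ => log (x ^ 2 + x + c)) ((2 * x + 1) / (x ^ 2 + x + c)) x := by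
  have h1 : HasDerivAt (fun x : ℝ => x ^ 2 + x + c) (2 * x + 1) x := by
    have := ((hasDerivAt_pow 2 x).add (hasDerivAt_id x)).add_const c
    simpa using this
  exact h1.log h.ne'

lemma hasDeriv_q1 (c : ℝ) {x : ℝ} (h : 0 < (x + 1) ^ 2 + (x + 1) + c) :
    HasDerivAt (fun x : ℝ => log ((x + 1) ^ 2 + (x + 1) + c))
      ((2 * (x + 1) + 1) / ((x + 1) ^ 2 + (x + 1) + c)) x :=
  (hasDeriv_q c h).comp_add_const x 1

lemma hasDeriv_inv (c : ℝ) {x : ℝ} (h : 0 < x + c) :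
    HasDerivAt (fun x : ℝ => 1 / (x + c)) (-1 / (x + c) ^ 2) x := by
  have := ((hasDerivAt_id x).add_const c).inv h.ne'
  simp only [one_div]
  simpa using! this

lemma KK_mono : ∀ x y, 0 ≤ x → x ≤ y → KK x ≤ KK y := by
  apply gen KK lim_KK
  have e : ∀ x, 0 ≤ x → KK (x + 1) - KK x = 1 / (x + 1)
      - 1 / 2 * log ((x + 1) ^ 2 + (x + 1) + 1 / 3) + 1 / 2 * log (x ^ 2 + x + 1 / 3) := by
    intro x hx
    unfold KK
    rw [dg_add (by positivity)]; ring
  have hd : ∀ x : ℝ, 0 ≤ x → HasDerivAt (fun x : ℝ => 1 / (x + 1)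
      - 1 / 2 * log ((x + 1) ^ 2 + (x + 1) + 1 / 3) + 1 / 2 * log (x ^ 2 + x + 1 / 3))
      (-1 / (x + 1) ^ 2 - 1 / 2 * ((2 * (x + 1) + 1) / ((x + 1) ^ 2 + (x + 1) + 1 / 3))
        + 1 / 2 * ((2 * x + 1) / (x ^ 2 + x + 1 / 3))) x := by
    intro x hx
    exact ((hasDeriv_inv 1 (by positivity)).sub ((hasDeriv_q1 (1/3) (by positivity)).const_mul _)).add
      ((hasDeriv_q (1/3) (by positivity)).const_mul _)
  have ha := antitoneOn_of_hasDerivWithinAt_nonpos (convex_Ici (0:ℝ))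
    (fun x hx => (hd x hx).continuousAt.continuousWithinAt)
    (fun x hx => (hd x (interior_subset hx)).hasDerivWithinAt) (by
      intro x hx
      have hx : 0 ≤ x := interior_subset hx
      have : (-1 / (x + 1) ^ 2 - 1 / 2 * ((2 * (x + 1) + 1) / ((x + 1) ^ 2 + (x + 1) + 1 / 3))
        + 1 / 2 * ((2 * x + 1) / (x ^ 2 + x + 1 / 3))) = -(1/9) /
          ((x + 1) ^ 2 * ((x + 1) ^ 2 + (x + 1) + 1 / 3) * (x ^ 2 + x + 1 / 3)) := by
        field_simp
        ring
      rw [this]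
      apply div_nonpos_of_nonpos_of_nonneg <;> [norm_num; positivity])
  intro x y hx hxy
  rw [e x hx, e y (hx.trans hxy)]
  exact ha hx (hx.trans hxy) hxy

lemma KK_nonpos {x : ℝ} (hx : 0 ≤ x) : KK x ≤ 0 := by
  apply ge_of_tendsto lim_KK
  filter_upwards [eventually_ge_atTop x] with y hy using KK_mono x y hx hy

lemma hasDeriv_l (c : ℝ) {x : ℝ} (h : 0 < x + c) :
    HasDerivAt (fun x : ℝ => log (x + c)) (1 / (x + c)) x :=
  ((hasDerivAt_id x).add_const c).log h.ne'

lemma dg_upper {x : ℝ} (hx : 0 ≤ x) :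
    digamma (x + 1) ≤ -Real.eulerMascheroniConstant + log (x + 1 / 2) - log (1 / 2) := by
  have lim : Tendsto (fun x : ℝ => log (x + 1 / 2) - digamma (x + 1)) atTop (nhds 0) := by
    have := (lim_l (1/2)).sub lim_dg
    simp only [sub_zero] at this
    refine this.congr fun x => ?_
    ring
  have hd : ∀ x : ℝ, 0 ≤ x → HasDerivAt (fun x : ℝ => log (x + 3 / 2) - 1 / (x + 1)
      - log (x + 1 / 2)) (1 / (x + 3 / 2) - (-1 / (x + 1) ^ 2) - 1 / (x + 1 / 2)) x := by
    intro x hx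
    exact ((hasDeriv_l _ (by positivity)).sub (hasDeriv_inv 1 (by positivity))).sub
      (hasDeriv_l _ (by positivity))
  have ha := antitoneOn_of_hasDerivWithinAt_nonpos (convex_Ici (0:ℝ))
    (fun x hx => (hd x hx).continuousAt.continuousWithinAt)
    (fun x hx => (hd x (interior_subset hx)).hasDerivWithinAt) (by
      intro x hx
      have hx : 0 ≤ x := interior_subset hx
      have : (1 / (x + 3 / 2) - (-1 / (x + 1) ^ 2) - 1 / (x + 1 / 2)) = -(1/4) /
          ((x + 1) ^ 2 * (x + 3 / 2) * (x + 1 / 2)) := by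
        field_simp
        ring
      rw [this]
      apply div_nonpos_of_nonpos_of_nonneg <;> [norm_num; positivity])
  have := gen _ lim (by
    intro x y hx hxy
    have h := ha hx (hx.trans hxy) hxy
    simp only at h
    rw [dg_add (x := x + 1) (by positivity), dg_add (x := y + 1) (by linarith)]
    rw [show x + 1 + 1 / 2 = x + 3 / 2 by ring, show y + 1 + 1 / 2 = y + 3 / 2 by ring]
    linarith) 0 x le_rfl hx
  simp only [zero_add] at this
  rw [dg_one] at this
  linarith

lemma log_sub_lt {A B : ℝ} (hB : 0 < B) (h : B < A) :
    log A - log B < (A / B - B / A) / 2 := by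
  have hA : 0 < A := hB.trans h
  have h1 : 0 < log A - log B := sub_pos.2 (log_lt_log hB h)
  have h2 := Real.self_lt_sinh_iff.2 h1
  rw [Real.sinh_eq, neg_sub, exp_sub, exp_sub, exp_log hA, exp_log hB] at h2
  exact h2

lemma B_pos {x a : ℝ} (hx : 0 ≤ x) (ha : 1 / 15 < a) :
    0 < x ^ 2 + x + (15 * a - 1) / (45 * a) := by
  have : 0 < (15 * a - 1) / (45 * a) := div_pos (by linarith) (by linarith)
  positivity

lemma A_pos {x a : ℝ} (hx : 0 ≤ x) (ha : 1 / 15 < a) :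
    0 < x ^ 2 + x + (3 * a + 1) / 3 := by
  have : 0 < (3 * a + 1) / 3 := div_pos (by linarith) (by norm_num)
  positivity

lemma L_hasDeriv_a {x : ℝ} (hx : 0 ≤ x) {a : ℝ} (ha : 1 / 15 < a) :
    ∃ d, 0 < d ∧ HasDerivAt (fun a => L x a) d a := by
  have ha0 : 0 < a := by linarith
  have hN : HasDerivAt (fun a : ℝ => 90 * a ^ 2 + 2) (90 * (2 * a)) a := by
    have := ((hasDerivAt_pow 2 a).const_mul 90).add_const 2
    simpa using this
  have h45 : HasDerivAt (fun a : ℝ => 45 * a ^ 2) (45 * (2 * a)) a := by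
    have := ((hasDerivAt_pow 2 a).const_mul 45)
    simpa using this
  have hN0 : 0 < 90 * a ^ 2 + 2 := by positivity
  have h1 := (hasDerivAt_const a (1:ℝ)).fun_div hN hN0.ne'
  have h2 := h45.fun_div hN hN0.ne'
  have hA : HasDerivAt (fun a : ℝ => x ^ 2 + x + (3 * a + 1) / 3) (3 / 3) a := by
    have := ((((hasDerivAt_id a).const_mul 3).add_const 1).div_const 3).const_add (x ^ 2 + x)
    simpa using! this
  have hB : HasDerivAt (fun a : ℝ => x ^ 2 + x + (15 * a - 1) / (45 * a))
      ((15 * (45 * a) - (15 * a - 1) * 45) / (45 * a) ^ 2) a := by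
    have := ((((hasDerivAt_id a).const_mul 15).sub_const 1).fun_div
      ((hasDerivAt_id a).const_mul 45) (by simp; positivity)).const_add (x ^ 2 + x)
    simpa using! this
  have pA := A_pos hx ha
  have pB := B_pos hx ha
  have h := (h1.fun_mul (hA.log pA.ne')).fun_add (h2.fun_mul (hB.log pB.ne'))
  refine ⟨_, ?_, h⟩
  have hAB : (x ^ 2 + x + (3 * a + 1) / 3) - (x ^ 2 + x + (15 * a - 1) / (45 * a))
      = (90 * a ^ 2 + 2) / (90 * a) := by
    field_simp; ring
  generalize x ^ 2 + x + (3 * a + 1) / 3 = A at *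
  generalize x ^ 2 + x + (15 * a - 1) / (45 * a) = B at *
  have hlt : B < A := by
    have : 0 < (90 * a ^ 2 + 2) / (90 * a) := by positivity
    linarith
  have hl := log_sub_lt pB hlt
  have e : (A / B - B / A) / 2 = (90 * a ^ 2 + 2) / (180 * a) * (1 / A + 1 / B) := by
    have : (A / B - B / A) / 2 = (A - B) / 2 * (1 / A + 1 / B) := by
      field_simp; ring
    rw [this, hAB]; field_simp; norm_num
  rw [e] at hl
  have : 0 < 180 * a / (90 * a ^ 2 + 2) ^ 2 *
      ((90 * a ^ 2 + 2) / (180 * a) * (1 / A + 1 / B) - (log A - log B)) :=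
    mul_pos (by positivity) (sub_pos.2 hl)
  refine this.trans_eq ?_
  field_simp
  ring

lemma L_mono {x : ℝ} (hx : 0 ≤ x) : StrictMonoOn (fun a => L x a) (Ioi (1 / 15)) := by
  apply strictMonoOn_of_deriv_pos (convex_Ioi _)
  · intro a ha
    obtain ⟨d, _, h⟩ := L_hasDeriv_a hx ha
    exact h.continuousAt.continuousWithinAt
  · intro a ha
    rw [interior_Ioi] at ha
    obtain ⟨d, h0, h⟩ := L_hasDeriv_a hx ha
    rwa [h.deriv]

lemma L_hasDeriv {x a : ℝ} (hx : 0 ≤ x) (ha : 1 / 15 < a) :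
    HasDerivAt (fun x => L x a)
      ((1 / (90 * a ^ 2 + 2)) * ((2 * x + 1) / (x ^ 2 + x + (3 * a + 1) / 3)) +
    (45 * a ^ 2 / (90 * a ^ 2 + 2)) * ((2 * x + 1) / (x ^ 2 + x + (15 * a - 1) / (45 * a)))) x :=
  ((hasDeriv_q _ (A_pos hx ha)).const_mul _).add ((hasDeriv_q _ (B_pos hx ha)).const_mul _)

lemma L_lim (a : ℝ) : Tendsto (fun x => L x a - log x) atTop (nhds 0) := by
  have := ((lim_q ((3 * a + 1) / 3)).const_mul (1 / (90 * a ^ 2 + 2))).add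
    ((lim_q ((15 * a - 1) / (45 * a))).const_mul (45 * a ^ 2 / (90 * a ^ 2 + 2)))
  simp only [mul_zero, add_zero] at this
  refine this.congr fun x => ?_
  unfold L
  field_simp
  ring

lemma F_lim (a : ℝ) : Tendsto (fun x => digamma (x + 1) - L x a) atTop (nhds 0) := by
  have := lim_dg.sub (L_lim a)
  simp only [sub_zero] at this
  refine this.congr fun x => ?_
  ring

lemma log_bd {x : ℝ} (h0 : 0 ≤ x) (h1 : x < 1) :
    2 * (x + x ^ 3 / 3 + x ^ 5 / 5 + x ^ 7 / 7) ≤ log ((1 + x) / (1 - x)) ∧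
    log ((1 + x) / (1 - x)) ≤
      2 * (x + x ^ 3 / 3 + x ^ 5 / 5 + x ^ 7 / 7 + x ^ 9 / (1 - x ^ 2)) := by
  have a1 := sum_range_le_log_div h0 h1 4
  have a2 := log_div_le_sum_range_add h0 h1 4
  norm_num [Finset.sum_range_succ] at a1 a2
  constructor <;> linarith

/-- The forward difference of `digamma (x+1) - L x (13/25)`. -/
noncomputable def Dl (x : ℝ) : ℝ := 1 / (x + 1) - L (x + 1) (13 / 25) + L x (13 / 25)

lemma Dl_start : Dl (1 / 20) < 0 := by
  unfold Dl L
  norm_num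
  have e1 : log (3607 / 1200) = 2 * log 2 - log (4348 / 3607) + log (1087 / 1200) := by
    rw [← log_rpow (by norm_num), ← log_div (by norm_num) (by norm_num),
      ← log_mul (by norm_num) (by norm_num)]
    norm_num
  have e2 : log (114337 / 46800) = 3 * log 2 - log (128456 / 114337) + log (16057 / 46800) := by
    rw [← log_rpow (by norm_num), ← log_div (by norm_num) (by norm_num),
      ← log_mul (by norm_num) (by norm_num)]
    norm_num
  have b1 := (log_bd (x := 741 / 7955) (by norm_num) (by norm_num)).2
  have b2 := (log_bd (x := 14119 / 242793) (by norm_num) (by norm_num)).2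
  norm_num at b1 b2
  rw [e1, e2]
  have := log_two_gt_d9
  linarith

lemma Dl_lim : Tendsto Dl atTop (nhds 0) := by
  have h := F_lim (13 / 25)
  have h1 : Tendsto (fun x : ℝ => x + 1) atTop atTop := tendsto_atTop_add_const_right _ _ tendsto_id
  have := (h.comp h1).sub h
  simp only [sub_zero] at this
  refine this.congr' ?_
  filter_upwards [eventually_ge_atTop 0] with x hx
  simp only [Function.comp]
  rw [dg_add (x := x + 1) (by positivity)]
  unfold Dl; ring

lemma Dl_deriv {x : ℝ} (hx : 0 ≤ x) : ∃ d, 0 < d ∧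
    HasDerivAt Dl (d * (5828 / 131625 * (x ^ 2 + 2 * x) - 1325596 / 77000625)) x := by
  have h := ((hasDeriv_inv 1 (x := x) (by positivity)).sub
    ((L_hasDeriv (x := x + 1) (a := 13 / 25) (by positivity) (by norm_num)).comp_add_const x 1)).add
    (L_hasDeriv (x := x) (a := 13 / 25) hx (by norm_num))
  refine ⟨1 / ((x + 1) ^ 2 * (x ^ 2 + x + 64 / 75) * (x ^ 2 + x + 34 / 117) *
    ((x + 1) ^ 2 + (x + 1) + 64 / 75) * ((x + 1) ^ 2 + (x + 1) + 34 / 117)), by positivity, ?_⟩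
  refine HasDerivAt.congr_deriv h ?_
  norm_num
  field_simp
  ring

lemma Dl_neg {x : ℝ} (hx : 1 / 20 ≤ x) : Dl x < 0 := by
  have hc : ∀ y, 0 ≤ y → ContinuousAt Dl y := fun y hy => by
    obtain ⟨d, _, h⟩ := Dl_deriv hy
    exact h.continuousAt
  by_cases hP : 0 ≤ 5828 / 131625 * (x ^ 2 + 2 * x) - 1325596 / 77000625
  · have hm : StrictMonoOn Dl (Ici x) := by
      apply strictMonoOn_of_deriv_pos (convex_Ici _)
      · intro y hy
        exact (hc y (by have : x ≤ y := hy
                        linarith)).continuousWithinAt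
      · intro y hy
        rw [interior_Ici] at hy
        have hy : x < y := hy
        obtain ⟨d, h0, h⟩ := Dl_deriv (x := y) (by linarith)
        rw [h.deriv]
        apply mul_pos h0
        nlinarith
    have h1 : Dl x < Dl (x + 1) := hm self_mem_Ici (show x ≤ x + 1 by linarith) (by linarith)
    have h2 : Dl (x + 1) ≤ 0 := by
      apply ge_of_tendsto Dl_lim
      filter_upwards [eventually_ge_atTop (x + 1)] with y hy
      exact hm.monotoneOn (show x ≤ x + 1 by linarith) (show x ≤ y by linarith) hy
    linarith
  · push Not at hP
    have hm : AntitoneOn Dl (Icc (1 / 20) x) := by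
      apply antitoneOn_of_deriv_nonpos (convex_Icc _ _)
      · intro y hy
        exact (hc y (by linarith [hy.1])).continuousWithinAt
      · intro y hy
        rw [interior_Icc] at hy
        obtain ⟨d, h0, h⟩ := Dl_deriv (x := y) (by linarith [hy.1])
        exact h.differentiableAt.differentiableWithinAt
      · intro y hy
        rw [interior_Icc] at hy
        obtain ⟨d, h0, h⟩ := Dl_deriv (x := y) (by linarith [hy.1])
        rw [h.deriv]
        apply mul_nonpos_of_nonneg_of_nonpos h0.le
        nlinarith [hy.1, hy.2]
    exact (hm (left_mem_Icc.2 hx) (right_mem_Icc.2 hx) hx).trans_lt Dl_start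

lemma F_pos_large {x : ℝ} (hx : 1 / 20 ≤ x) : L x (13 / 25) < digamma (x + 1) := by
  have step : ∀ y : ℝ, 1 / 20 ≤ y → digamma (y + 1 + 1) - L (y + 1) (13 / 25)
      < digamma (y + 1) - L y (13 / 25) := by
    intro y hy
    have := Dl_neg hy
    rw [dg_add (x := y + 1) (by linarith)]
    unfold Dl at this
    linarith
  have ha : Antitone (fun n : ℕ => digamma (x + n + 1) - L (x + n) (13 / 25)) := by
    apply antitone_nat_of_succ_le
    intro n
    have := step (x + n) (by have : (0:ℝ) ≤ n := n.cast_nonneg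
                             linarith)
    push_cast
    rw [← add_assoc]
    exact this.le
  have := ha.le_of_tendsto ((F_lim (13 / 25)).comp
    (tendsto_atTop_add_const_left _ _ tendsto_natCast_atTop_atTop)) 1
  have h2 := step x hx
  simp only [Nat.cast_one] at this
  linarith

lemma L_half_lt : L 0 (1 / 2) < -Real.eulerMascheroniConstant := by
  have h := F_pos_large (x := 1) (by norm_num)
  rw [dg_add (by norm_num), dg_one] at h
  have : L 0 (1 / 2) + 1 ≤ L 1 (13 / 25) := by
    unfold L
    norm_num
    have e1 : log (214 / 75) = log 2 + log (107 / 75) := by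
      rw [← log_mul (by norm_num) (by norm_num)]; norm_num
    have e2 : log (268 / 117) = log 2 + log (134 / 117) := by
      rw [← log_mul (by norm_num) (by norm_num)]; norm_num
    have e3 : log (5 / 6) = - log (6 / 5) := by
      rw [← log_inv]; norm_num
    have e4 : log (13 / 45) = - (2 * log 2) + log (52 / 45) := by
      rw [← log_rpow (by norm_num), ← log_inv, ← log_mul (by norm_num) (by norm_num)]; norm_num
    have b1 := (log_bd (x := 32 / 182) (by norm_num) (by norm_num)).1
    have b2 := (log_bd (x := 17 / 251) (by norm_num) (by norm_num)).1
    have b3 := (log_bd (x := 1 / 11) (by norm_num) (by norm_num)).1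
    have b4 := (log_bd (x := 7 / 97) (by norm_num) (by norm_num)).2
    norm_num at b1 b2 b3 b4
    rw [e1, e2, e3, e4]
    have := log_two_gt_d9
    linarith
  linarith

lemma L_lt_13 : -Real.eulerMascheroniConstant < L 0 (13 / 25) := by
  have h := KK_nonpos (x := 3) (by norm_num)
  unfold KK at h
  have h1 : digamma (3 + 1) = -Real.eulerMascheroniConstant + 11 / 6 := by
    rw [dg_add (by norm_num), show (3:ℝ) = 1 + 1 + 1 by norm_num, dg_add (by norm_num),
      dg_add (by norm_num), dg_one]
    norm_num
    ring
  rw [h1] at h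
  have : 1 / 2 * log (3 ^ 2 + 3 + 1 / 3) - 11 / 6 < L 0 (13 / 25) := by
    unfold L
    norm_num
    have e1 : log (37 / 3) = 3 * log 2 + log (37 / 24) := by
      rw [← log_rpow (by norm_num), ← log_mul (by norm_num) (by norm_num)]; norm_num
    have e3 : log (64 / 75) = - log (75 / 64) := by
      rw [← log_inv]; norm_num
    have e4 : log (34 / 117) = - (2 * log 2) + log (136 / 117) := by
      rw [← log_rpow (by norm_num), ← log_inv, ← log_mul (by norm_num) (by norm_num)]; norm_num
    have b1 := (log_bd (x := 13 / 61) (by norm_num) (by norm_num)).2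
    have b3 := (log_bd (x := 11 / 139) (by norm_num) (by norm_num)).2
    have b4 := (log_bd (x := 19 / 253) (by norm_num) (by norm_num)).1
    norm_num at b1 b3 b4
    rw [e1, e3, e4]
    have := log_two_lt_d9
    linarith
  linarith

lemma Lp_le {x a : ℝ} (hx : 0 ≤ x) (ha : 1 / 2 ≤ a) :
    (1 / (90 * a ^ 2 + 2)) * ((2 * x + 1) / (x ^ 2 + x + (3 * a + 1) / 3)) +
    (45 * a ^ 2 / (90 * a ^ 2 + 2)) * ((2 * x + 1) / (x ^ 2 + x + (15 * a - 1) / (45 * a)))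
    ≤ (x + 1 / 2) * (x ^ 2 + x + 71 / 90) / ((x ^ 2 + x + 5 / 6) * (x ^ 2 + x + 13 / 45)) := by
  have pA := A_pos hx (show 1 / 15 < a by linarith)
  have pB := B_pos hx (show 1 / 15 < a by linarith)
  have ha0 : 0 < a := by linarith
  have hs : 41 / 90 ≤ a - 1 / (45 * a) := by
    have : 1 / (45 * a) ≤ 2 / 45 := by
      rw [div_le_div_iff₀ (by positivity) (by norm_num)]; linarith
    linarith
  have e : (1 / (90 * a ^ 2 + 2)) * ((2 * x + 1) / (x ^ 2 + x + (3 * a + 1) / 3)) +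
    (45 * a ^ 2 / (90 * a ^ 2 + 2)) * ((2 * x + 1) / (x ^ 2 + x + (15 * a - 1) / (45 * a)))
    = (x + 1 / 2) * (x ^ 2 + x + 1 / 3 + (a - 1 / (45 * a))) /
      ((x ^ 2 + x + (3 * a + 1) / 3) * (x ^ 2 + x + (15 * a - 1) / (45 * a))) := by
    have h1 : x ^ 2 + x + (15 * a - 1) / (45 * a)
      = (45 * a * (x ^ 2 + x) + (15 * a - 1)) / (45 * a) := by field_simp
    have h2 : 0 < 45 * a * (x ^ 2 + x) + (15 * a - 1) := by
      have : 0 < 15 * a - 1 := by linarith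
      positivity
    rw [h1]
    generalize x ^ 2 + x = u at *
    generalize hD : 45 * a * u + (15 * a - 1) = D at *
    have hu : u = (D - (15 * a - 1)) / (45 * a) := by
      rw [← hD]; field_simp; ring
    have hA : u + (3 * a + 1) / 3 = (D + 1 + 45 * a ^ 2) / (45 * a) := by
      rw [hu]; field_simp; ring
    have hC : u + 1 / 3 + (a - 1 / (45 * a)) = (D + 45 * a ^ 2) / (45 * a) := by
      rw [hu]; field_simp; ring
    rw [hA, hC]
    field_simp
    ring
  have e2 : (x ^ 2 + x + (3 * a + 1) / 3) * (x ^ 2 + x + (15 * a - 1) / (45 * a)) =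
      (x ^ 2 + x + 1 / 3) ^ 2 + (x ^ 2 + x + 1 / 3) * (a - 1 / (45 * a)) - 1 / 45 := by
    field_simp
    ring
  have hp := mul_pos pA pB
  rw [e, e2]
  rw [e2] at hp
  generalize a - 1 / (45 * a) = s at *
  rw [div_le_div_iff₀ hp (by positivity), mul_assoc, mul_assoc]
  apply mul_le_mul_of_nonneg_left _ (by positivity)
  nlinarith

lemma F_small {x a : ℝ} (hx : 0 < x) (hx1 : x ≤ 1 / 20) (ha : 1 / 2 ≤ a) :
    digamma 1 - L 0 a < digamma (x + 1) - L x a := by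
  have ha' : 1 / 15 < a := by linarith
  have hd : ∀ x : ℝ, 0 ≤ x → HasDerivAt (fun x : ℝ => 1 / 2 * log ((x + 2) ^ 2 + (x + 2) + 1 / 3)
      - 1 / (x + 1) - 1 / (x + 2) - L x a)
      (1 / 2 * ((2 * (x + 2) + 1) / ((x + 2) ^ 2 + (x + 2) + 1 / 3)) - (-1 / (x + 1) ^ 2)
        - (-1 / (x + 2) ^ 2) -
      ((1 / (90 * a ^ 2 + 2)) * ((2 * x + 1) / (x ^ 2 + x + (3 * a + 1) / 3)) +
    (45 * a ^ 2 / (90 * a ^ 2 + 2)) * ((2 * x + 1) / (x ^ 2 + x + (15 * a - 1) / (45 * a))))) x := by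
    intro x hx
    exact (((((hasDeriv_q (1/3) (x := x + 2) (by positivity)).comp_add_const x 2).const_mul _).sub
      (hasDeriv_inv 1 (by positivity))).sub (hasDeriv_inv 2 (by positivity))).sub
      (L_hasDeriv hx ha')
  have hm := strictMonoOn_of_hasDerivWithinAt_pos (convex_Icc (0:ℝ) (1 / 20))
    (fun x hx => (hd x hx.1).continuousAt.continuousWithinAt)
    (fun x hx => (hd x (interior_subset hx).1).hasDerivWithinAt) (by
      intro x hx
      obtain ⟨h0, h1⟩ : x ∈ Icc (0:ℝ) (1 / 20) := interior_subset hx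
      have := Lp_le h0 ha
      refine lt_of_lt_of_le ?_ (sub_le_sub_left this _)
      have e : (1 / 2 * ((2 * (x + 2) + 1) / ((x + 2) ^ 2 + (x + 2) + 1 / 3)) - (-1 / (x + 1) ^ 2)
        - (-1 / (x + 2) ^ 2) - (x + 1 / 2) * (x ^ 2 + x + 71 / 90) /
          ((x ^ 2 + x + 5 / 6) * (x ^ 2 + x + 13 / 45)))
        = (31 / 810 - 11 / 27 * x + 13 / 810 * x ^ 2 - 4 / 45 * x ^ 3 - 1 / 90 * x ^ 4
          - 1 / 45 * x ^ 5) / (((x + 2) ^ 2 + (x + 2) + 1 / 3) * (x + 1) ^ 2 * (x + 2) ^ 2 *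
          ((x ^ 2 + x + 5 / 6) * (x ^ 2 + x + 13 / 45))) := by
        field_simp
        ring
      rw [e]
      apply div_pos _ (by positivity)
      have q2 : x ^ 2 ≤ (1 / 20) ^ 2 := by gcongr
      have q3 : x ^ 3 ≤ (1 / 20) ^ 3 := by gcongr
      have q4 : x ^ 4 ≤ (1 / 20) ^ 4 := by gcongr
      have q5 : x ^ 5 ≤ (1 / 20) ^ 5 := by gcongr
      norm_num at q2 q3 q4 q5
      have : 0 ≤ x ^ 2 := by positivity
      linarith)
  have h1 := hm ⟨le_rfl, by norm_num⟩ ⟨hx.le, hx1⟩ hx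
  have h2 := KK_mono (0 + 2) (x + 2) (by norm_num) (by linarith)
  have r : ∀ y : ℝ, 0 ≤ y → digamma (y + 2 + 1) = digamma (y + 1) + 1 / (y + 1) + 1 / (y + 2) := by
    intro y hy
    rw [dg_add (by linarith), show y + 2 = y + 1 + 1 by ring, dg_add (by linarith)]
  unfold KK at h2
  rw [r 0 le_rfl, r x hx.le, show (0:ℝ) + 1 = 1 by norm_num] at h2
  simp only at h1
  rw [show (0:ℝ) + 1 = 1 by norm_num] at h1
  linarith

/-- The equation −γ = L(0,a) has a unique root a₀ in (1/15, ∞), with a₀ ∈ (1/2, 3/5);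
and for a > 1/15, ψ(x+1) > L(x,a) holds for all x > 0 iff a ∈ (1/15, a₀]. -/
theorem stmt_14 :
    ∃ a₀ : ℝ, a₀ ∈ Set.Ioo (1 / 2 : ℝ) (3 / 5) ∧
      (∀ a ∈ Set.Ioi (1 / 15 : ℝ), (-Real.eulerMascheroniConstant = L 0 a ↔ a = a₀)) ∧
      (∀ a : ℝ, 1 / 15 < a →
        ((∀ x : ℝ, 0 < x → digamma (x + 1) > L x a) ↔ a ∈ Set.Ioc (1 / 15 : ℝ) a₀)) := by
  have hm := L_mono (x := 0) le_rfl
  have hcont : ContinuousOn (fun a => L 0 a) (Icc (1 / 2) (13 / 25)) := by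
    intro a ha
    obtain ⟨d, _, h⟩ := L_hasDeriv_a (x := 0) le_rfl (a := a) (by linarith [ha.1])
    exact h.continuousAt.continuousWithinAt
  obtain ⟨a₀, ⟨h1, h2⟩, h3⟩ := intermediate_value_Ioo (by norm_num) hcont
    (show -Real.eulerMascheroniConstant ∈ Ioo (L 0 (1 / 2)) (L 0 (13 / 25)) from
      ⟨L_half_lt, L_lt_13⟩)
  simp only at h3
  have m0 : a₀ ∈ Ioi (1 / 15 : ℝ) := show 1 / 15 < a₀ by linarith
  refine ⟨a₀, ⟨h1, by linarith⟩, ?_, ?_⟩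
  · intro a ha
    rw [← h3]
    exact ⟨fun h => (hm.injOn m0 ha h).symm, fun h => by rw [h]⟩
  · intro a ha
    constructor
    · intro H
      refine ⟨ha, ?_⟩
      by_contra hlt
      push Not at hlt
      have hL : L 0 a₀ < L 0 a := hm m0 ha hlt
      rw [h3] at hL
      -- let `x` tend to `0` from the right
      have c1 : ContinuousAt (fun x => L x a) 0 := (L_hasDeriv le_rfl ha).continuousAt
      have c2 : ContinuousAt (fun x : ℝ => -Real.eulerMascheroniConstant + log (x + 1 / 2)
          - log (1 / 2)) 0 :=
        (continuousAt_const.add (hasDeriv_l (1 / 2) (x := 0) (by norm_num)).continuousAt).sub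
          continuousAt_const
      have ev := c2.eventually_lt c1 (by simpa using hL)
      have ev2 : ∀ᶠ x : ℝ in nhdsWithin 0 (Ioi 0), 0 < x := self_mem_nhdsWithin
      obtain ⟨x, hx1, hx2⟩ := ((ev.filter_mono nhdsWithin_le_nhds).and ev2).exists
      have := H x hx2
      have := dg_upper hx2.le
      linarith
    · rintro ⟨_, hle⟩ x hx
      have hmx := L_mono hx.le
      have g1 : L x a ≤ L x a₀ := hmx.monotoneOn ha m0 hle
      rcases le_total x (1 / 20) with h | h
      · have := F_small hx h h1.le
        rw [dg_one, h3] at this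
        linarith
      · have g2 : L x a₀ < L x (13 / 25) := hmx m0 (show (1:ℝ) / 15 < 13 / 25 by norm_num) h2
        have := F_pos_large h
        linarith
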